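/- arXiv:0808.1403 — 9 statements merged into one kernel-verified Lean document; each statement's English description precedes it below -/
import Mathlib

section
/- For every integer m ≥ 2, the set D_m = {x ∈ S_m : the two-sided orbit O(x) = {σ^k(x) : k ∈ ℤ} is dense in S_m} is itself a dense subset of S_m. -/
/-- The solenoid `S_m` as a subgroup of the product group `∏_{i∈ℕ} 𝕋`. -/
noncomputable def solenoid (m : ℕ) : Subgroup (ℕ → Circle) where
  carrier := {x : ℕ → Circle | ∀ i : ℕ, x (i + 1) ^ m = x i}
  one_mem' := fun i => one_pow m
  mul_mem' := by
    intro a b ha hb i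
    simp only [Pi.mul_apply, mul_pow, ha i, hb i]
  inv_mem' := by
    intro a ha i
    simp only [Pi.inv_apply, inv_pow, ha i]

theorem sol_nhds (m : ℕ) (U : Set ↥(solenoid m)) (hU : IsOpen U) (x : ↥(solenoid m))
    (hx : x ∈ U) : ∃ (n : ℕ) (W : Set Circle), IsOpen W ∧ (x : ℕ → Circle) n ∈ W ∧
      ∀ y : ↥(solenoid m), (y : ℕ → Circle) n ∈ W → y ∈ U := by
  have hpow : ∀ (y : ↥(solenoid m)) (i d : ℕ),
      (y : ℕ → Circle) (i + d) ^ (m ^ d) = (y : ℕ → Circle) i := by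
    intro y i d
    induction d with
    | zero => simp
    | succ d ih =>
      rw [pow_succ', pow_mul, ← add_assoc, y.2 (i + d), ih]
  obtain ⟨U', hU', rfl⟩ := isOpen_induced_iff.1 hU
  obtain ⟨I, u, hu, hsub⟩ := isOpen_pi_iff.1 hU' x hx
  have hle : ∀ i ∈ I, i + (I.sup id - i) = I.sup id := fun i hi =>
    Nat.add_sub_cancel' (Finset.le_sup (f := id) hi)
  refine ⟨I.sup id, ⋂ i ∈ I, {w | w ^ (m ^ (I.sup id - i)) ∈ u i}, ?_, ?_, ?_⟩
  · apply isOpen_biInter_finset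
    intro i hi
    exact (hu i hi).1.preimage (continuous_pow _)
  · simp only [Set.mem_iInter, Set.mem_ofPred_eq]
    intro i hi
    have := hpow x i (I.sup id - i)
    rw [hle i hi] at this
    rw [this]
    exact (hu i hi).2
  · intro y hy
    simp only [Set.mem_iInter, Set.mem_ofPred_eq] at hy
    apply hsub
    intro i hi
    have := hpow y i (I.sup id - i)
    rw [hle i hi] at this
    rw [← this]
    exact hy i hi

theorem sol_approx (m : ℕ) (hm : 2 ≤ m) (W : Set Circle) (hW : IsOpen W) (w : Circle)
    (hw : w ∈ W) (z : Circle) (n : ℕ) :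
    ∃ (a : ℝ) (j : ℕ), Circle.exp a ∈ W ∧ Circle.exp (a * (m : ℝ) ^ (n + j)) = z := by
  obtain ⟨a, rfl⟩ : ∃ a, Circle.exp a = w := ⟨_, Circle.exp_arg w⟩
  obtain ⟨b, rfl⟩ : ∃ b, Circle.exp b = z := ⟨_, Circle.exp_arg z⟩
  obtain ⟨ε, hε, hball⟩ := Metric.isOpen_iff.1 (hW.preimage Circle.exp.continuous) a hw
  have hm1 : (1 : ℝ) < m := by exact_mod_cast hm
  obtain ⟨j, hj⟩ := pow_unbounded_of_one_lt (Real.pi / ε) hm1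
  have hM : Real.pi / ε < (m : ℝ) ^ (n + j) :=
    hj.trans_le (pow_le_pow_right₀ hm1.le (Nat.le_add_left j n))
  have hMpos : (0 : ℝ) < (m : ℝ) ^ (n + j) := by positivity
  generalize hMM : (m : ℝ) ^ (n + j) = M at hM hMpos
  set t : ℤ := round ((a * M - b) / (2 * Real.pi)) with ht
  have hr := abs_sub_round ((a * M - b) / (2 * Real.pi))
  rw [← ht] at hr
  have hpi := Real.pi_pos
  refine ⟨(b + t * (2 * Real.pi)) / M, j, ?_, ?_⟩
  · apply hball
    rw [Metric.mem_ball, dist_comm, Real.dist_eq]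
    have e : a - (b + t * (2 * Real.pi)) / M
        = ((a * M - b) / (2 * Real.pi) - t) * (2 * Real.pi / M) := by
      field_simp
      ring
    rw [e, abs_mul, abs_of_pos (show 0 < 2 * Real.pi / M by positivity)]
    calc _ ≤ 1 / 2 * (2 * Real.pi / M) := by gcongr
      _ = Real.pi / M := by ring
      _ < ε := by
        rw [div_lt_iff₀ hε] at hM
        rw [div_lt_iff₀ hMpos]
        linarith
  · rw [hMM, div_mul_cancel₀ _ hMpos.ne']
    rw [Circle.exp_add, Circle.exp_int_mul_two_pi, mul_one]

/-- For every integer `m ≥ 2`, the set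
`D_m = {x ∈ S_m : the two-sided orbit O(x) = {σ^k(x) : k ∈ ℤ} is dense in S_m}`
is itself a dense subset of `S_m`.  Here `σ` is the group automorphism of `S_m`
given by the shift `σ(x)_i = x_{i+1}`, so `σ^k` makes sense for all `k ∈ ℤ`. -/
theorem solenoid_dense_orbit_points_dense (m : ℕ) (hm : 2 ≤ m)
    (σ : MulAut ↥(solenoid m))
    (hσ : ∀ (x : ↥(solenoid m)) (i : ℕ),
      ((σ x : ℕ → Circle) i) = (x : ℕ → Circle) (i + 1)) :
    Dense {x : ↥(solenoid m) | Dense (Set.range fun k : ℤ => (σ ^ k) x)} := by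
  have hpow : ∀ (a : ℝ) (k : ℕ), Circle.exp a ^ k = Circle.exp (a * k) := by
    intro a k
    induction k with
    | zero => simp
    | succ k ih => rw [pow_succ, ih, ← Circle.exp_add]; push_cast; ring_nf
  have hm0 : (m : ℝ) ≠ 0 := by
    have : m ≠ 0 := by omega
    exact_mod_cast this
  have hinv : ∀ (x : ↥(solenoid m)) (i : ℕ),
      ((σ⁻¹ x : ↥(solenoid m)) : ℕ → Circle) i = (x : ℕ → Circle) i ^ m := by
    intro x i
    have h1 := hσ (σ⁻¹ x) i
    rw [MulAut.apply_inv_self] at h1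
    rw [h1]
    exact ((σ⁻¹ x).2 i).symm
  have hinvk : ∀ (k : ℕ) (x : ↥(solenoid m)) (i : ℕ),
      (((σ⁻¹ ^ k) x : ↥(solenoid m)) : ℕ → Circle) i = (x : ℕ → Circle) i ^ (m ^ k) := by
    intro k
    induction k with
    | zero => intro x i; simp
    | succ k ih =>
      intro x i
      rw [pow_succ, MulAut.mul_apply, ih, hinv, ← pow_mul, ← pow_succ']
  have hcont : ∀ k : ℕ, Continuous fun x : ↥(solenoid m) => (σ⁻¹ ^ k) x := by
    intro k
    refine Continuous.subtype_mk (f := fun x : ↥(solenoid m) =>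
      (((σ⁻¹ ^ k) x : ↥(solenoid m)) : ℕ → Circle)) ?_ _
    refine continuous_pi fun i => ?_
    simp only [hinvk]
    exact ((continuous_apply i).comp continuous_subtype_val).pow _
  have hclosed : IsClosed ((solenoid m : Subgroup (ℕ → Circle)) : Set (ℕ → Circle)) := by
    have : ((solenoid m : Subgroup (ℕ → Circle)) : Set (ℕ → Circle))
        = ⋂ i : ℕ, {x : ℕ → Circle | x (i + 1) ^ m = x i} := by
      ext x
      simp only [Set.mem_iInter, Set.mem_ofPred_eq]
      exact Iff.rfl
    rw [this]
    exact isClosed_iInter fun i =>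
      isClosed_eq ((continuous_apply (i + 1)).pow m) (continuous_apply i)
  have : CompactSpace ↥(solenoid m) := isCompact_iff_compactSpace.1 hclosed.isCompact
  have htrans : ∀ U V : Set ↥(solenoid m), IsOpen U → IsOpen V → U.Nonempty → V.Nonempty →
      ∃ k : ℕ, ∃ y ∈ U, (σ⁻¹ ^ k) y ∈ V := by
    rintro U V hU hV ⟨u, hu⟩ ⟨v, hv⟩
    obtain ⟨n, W, hW, huW, hWU⟩ := sol_nhds m U hU u hu
    obtain ⟨l, W', hW', hvW', hWV⟩ := sol_nhds m V hV v hv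
    obtain ⟨a, j, ha, haj⟩ := sol_approx m hm W hW _ huW ((v : ℕ → Circle) l) n
    let y : ↥(solenoid m) := ⟨fun i => Circle.exp (a * (m : ℝ) ^ n / (m : ℝ) ^ i), by
      intro i
      show Circle.exp _ ^ m = Circle.exp _
      rw [hpow]
      congr 1
      field_simp
      try ring⟩
    refine ⟨l + j, y, hWU _ ?_, hWV _ ?_⟩
    · show Circle.exp (a * (m : ℝ) ^ n / (m : ℝ) ^ n) ∈ W
      rwa [mul_div_cancel_right₀ _ (pow_ne_zero n hm0)]
    · rw [hinvk]
      show Circle.exp (a * (m : ℝ) ^ n / (m : ℝ) ^ l) ^ _ ∈ W'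
      rw [hpow]
      have e : a * (m : ℝ) ^ n / (m : ℝ) ^ l * ((m ^ (l + j) : ℕ) : ℝ)
          = a * (m : ℝ) ^ (n + j) := by
        push_cast
        rw [pow_add, pow_add]
        field_simp
      rw [e, haj]
      exact hvW'
  have hsc : SecondCountableTopology Circle :=
    Topology.IsEmbedding.subtypeVal.secondCountableTopology
  have hsc' : SecondCountableTopology ↥(solenoid m) :=
    Topology.IsEmbedding.subtypeVal.secondCountableTopology
  let B := TopologicalSpace.countableBasis ↥(solenoid m)
  have hB := TopologicalSpace.isBasis_countableBasis ↥(solenoid m)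
  have hdense : Dense (⋂ V ∈ B, ⋃ k : ℕ, (fun x : ↥(solenoid m) => (σ⁻¹ ^ k) x) ⁻¹' V) := by
    apply dense_biInter_of_isOpen
    · intro V hV
      exact isOpen_iUnion fun k => (hB.isOpen hV).preimage (hcont k)
    · exact TopologicalSpace.countable_countableBasis _
    · intro V hV
      rw [dense_iff_inter_open]
      intro U hU hUn
      obtain ⟨k, y, hy, hyV⟩ := htrans U V hU (hB.isOpen hV) hUn
        (TopologicalSpace.nonempty_of_mem_countableBasis hV)
      exact ⟨y, hy, Set.mem_iUnion.2 ⟨k, hyV⟩⟩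
  refine hdense.mono ?_
  intro x hx
  simp only [Set.mem_iInter, Set.mem_iUnion] at hx
  show Dense _
  rw [hB.dense_iff]
  intro V hV _
  obtain ⟨k, hk⟩ := hx V hV
  refine ⟨_, hk, -(k : ℤ), ?_⟩
  show (σ ^ (-(k : ℤ))) x = (σ⁻¹ ^ k) x
  rw [zpow_neg, zpow_natCast, inv_pow]
end

section
/- Let m ≥ 1 and n ≥ 2 be integers with gcd(m, n) = 1. Then there exist bounded operators U and S on the Hilbert space ℓ²(ℤ[1/m]) such that U e_q = e_{q+1} and S e_q = e_{(n/m)q − 1} for every q ∈ ℤ[1/m]; moreover U is unitary, S is an isometry, and they satisfy the relations U^n S = S U^m and Σ_{i=0}^{n−1} U^i S S* U^{−i} = 1 (i.e., setting S_i = U^{i−1}S for i = 1, …, n, the operators z = U, S_1, …, S_n satisfy the defining relations of O_{(m,n)}(𝕋)). -/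
/-- `ℤ[1/m]`, the subring `{p/m^k : p ∈ ℤ, k ∈ ℕ}` of `ℚ`, as a set. -/
def zInvM (m : ℕ) : Set ℚ := {q : ℚ | ∃ (p : ℤ) (k : ℕ), q = (p : ℚ) / (m : ℚ) ^ k}

/-- The standard orthonormal basis vector `e_q` of `ℓ²(ℤ[1/m])`, indexed by rationals
(equal to `0` for `q ∉ ℤ[1/m]`; it is only ever used at points of `ℤ[1/m]`). -/
noncomputable def stdBasis (m : ℕ) (q : ℚ) : lp (fun _ : ↥(zInvM m) => ℂ) 2 :=
  haveI := Classical.dec (q ∈ zInvM m)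
  if h : q ∈ zInvM m then lp.single 2 (⟨q, h⟩ : ↥(zInvM m)) (1 : ℂ) else 0

section Helpers

variable {X : Type*} [DecidableEq X]

/-- The standard basis vector. -/
noncomputable def bvec (x : X) : lp (fun _ : X => ℂ) 2 := lp.single 2 x (1 : ℂ)

theorem bvec_inner (x : X) (v : lp (fun _ : X => ℂ) 2) : inner ℂ (bvec x) v = v x := by
  rw [bvec, lp.inner_single_left]; simp

theorem bvec_orthonormal : Orthonormal ℂ (bvec : X → lp (fun _ : X => ℂ) 2) := by
  rw [orthonormal_iff_ite]
  intro i j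
  rw [bvec_inner, bvec, lp.single_apply, Pi.single_apply]

theorem clm_ext {A B : lp (fun _ : X => ℂ) 2 →L[ℂ] lp (fun _ : X => ℂ) 2}
    (h : ∀ x, A (bvec x) = B (bvec x)) : A = B := by
  refine lp.ext_continuousLinearMap (ENNReal.ofNat_ne_top (n := nat_lit 2)) fun i => ?_
  ext1
  exact h i

/-- The isometry induced by an injective self-map of the index set. -/
noncomputable def shiftOp (f : X → X) (hf : Function.Injective f) :
    lp (fun _ : X => ℂ) 2 →ₗᵢ[ℂ] lp (fun _ : X => ℂ) 2 :=
  ((bvec_orthonormal (X := X)).comp f hf).orthogonalFamily.linearIsometry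

theorem shiftOp_bvec (f : X → X) (hf : Function.Injective f) (x : X) :
    shiftOp f hf (bvec x) = bvec (f x) := by
  rw [shiftOp, bvec, OrthogonalFamily.linearIsometry_apply_single]
  simp

theorem star_apply_of_basis (A : lp (fun _ : X => ℂ) 2 →L[ℂ] lp (fun _ : X => ℂ) 2)
    (f : X → X) (hA : ∀ x, A (bvec x) = bvec (f x)) (v : lp (fun _ : X => ℂ) 2) (x : X) :
    (star A) v x = v (f x) := by
  rw [← bvec_inner, ContinuousLinearMap.star_eq_adjoint, ContinuousLinearMap.adjoint_inner_right,
    hA, bvec_inner]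

theorem star_bvec_range (A : lp (fun _ : X => ℂ) 2 →L[ℂ] lp (fun _ : X => ℂ) 2)
    (f : X → X) (hf : Function.Injective f) (hA : ∀ x, A (bvec x) = bvec (f x)) (x : X) :
    (star A) (bvec (f x)) = bvec x := by
  ext y
  rw [star_apply_of_basis A f hA]
  simp [bvec, Pi.single_apply, hf.eq_iff]

theorem star_bvec_not_range (A : lp (fun _ : X => ℂ) 2 →L[ℂ] lp (fun _ : X => ℂ) 2)
    (f : X → X) (hA : ∀ x, A (bvec x) = bvec (f x)) (y : X) (hy : ∀ x, f x ≠ y) :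
    (star A) (bvec y) = 0 := by
  ext x
  rw [star_apply_of_basis A f hA]
  simp [bvec, Pi.single_apply, hy]

theorem pow_bvec (A : lp (fun _ : X => ℂ) 2 →L[ℂ] lp (fun _ : X => ℂ) 2)
    (f : X → X) (hA : ∀ x, A (bvec x) = bvec (f x)) (k : ℕ) (x : X) :
    (A ^ k) (bvec x) = bvec (f^[k] x) := by
  induction k generalizing x with
  | zero => simp
  | succ k ih => rw [pow_succ, mul_apply_eq_comp, hA, ih, Function.iterate_succ_apply]

/-- Abstract version of the theorem. -/
theorem abstract_rep (f g : X → X) (hf : Function.Bijective f) (hg : Function.Injective g)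
    (m n : ℕ) (hfg : ∀ x, f^[n] (g x) = g (f^[m] x))
    (hpart : ∀ y, ∃ i ∈ Finset.range n, (∃ x, f^[i] (g x) = y) ∧
      ∀ j ∈ Finset.range n, j ≠ i → ∀ x, f^[j] (g x) ≠ y) :
    ∃ U S : lp (fun _ : X => ℂ) 2 →L[ℂ] lp (fun _ : X => ℂ) 2,
      (∀ x, U (bvec x) = bvec (f x)) ∧ (∀ x, S (bvec x) = bvec (g x)) ∧
      U ∈ unitary (lp (fun _ : X => ℂ) 2 →L[ℂ] lp (fun _ : X => ℂ) 2) ∧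
      (∀ v, ‖S v‖ = ‖v‖) ∧
      U ^ n * S = S * U ^ m ∧
      ∑ i ∈ Finset.range n, U ^ i * S * star S * star (U ^ i) = 1 := by
  obtain ⟨U, hU⟩ : ∃ U : lp (fun _ : X => ℂ) 2 →L[ℂ] lp (fun _ : X => ℂ) 2,
      ∀ x, U (bvec x) = bvec (f x) :=
    ⟨(shiftOp f hf.1).toContinuousLinearMap, shiftOp_bvec f hf.1⟩
  obtain ⟨S, hS, hSn⟩ : ∃ S : lp (fun _ : X => ℂ) 2 →L[ℂ] lp (fun _ : X => ℂ) 2,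
      (∀ x, S (bvec x) = bvec (g x)) ∧ ∀ v, ‖S v‖ = ‖v‖ :=
    ⟨(shiftOp g hg).toContinuousLinearMap, shiftOp_bvec g hg, (shiftOp g hg).norm_map⟩
  refine ⟨U, S, hU, hS, ?_, hSn, ?_, ?_⟩
  · rw [Unitary.mem_iff]
    constructor
    · refine clm_ext fun x => ?_
      rw [mul_apply_eq_comp, hU, star_bvec_range U f hf.1 hU]; rfl
    · refine clm_ext fun y => ?_
      obtain ⟨x, rfl⟩ := hf.2 y
      rw [mul_apply_eq_comp, star_bvec_range U f hf.1 hU, hU]; rfl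
  · refine clm_ext fun x => ?_
    rw [mul_apply_eq_comp, mul_apply_eq_comp, hS, pow_bvec U f hU,
      pow_bvec U f hU, hS, hfg]
  · have hA : ∀ i x, (U ^ i * S) (bvec x) = bvec (f^[i] (g x)) := fun i x => by
      rw [mul_apply_eq_comp, hS, pow_bvec U f hU]
    have hterm : ∀ i, U ^ i * S * star S * star (U ^ i) = (U ^ i * S) * star (U ^ i * S) :=
      fun i => by simp only [star_mul, mul_assoc]
    refine clm_ext fun y => ?_
    obtain ⟨i, hi, ⟨x, hx⟩, hj⟩ := hpart y
    rw [sum_apply, Finset.sum_eq_single_of_mem i hi]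
    · rw [hterm, mul_apply_eq_comp, ← hx,
        star_bvec_range (U ^ i * S) (fun x => f^[i] (g x)) ((hf.1.iterate i).comp hg) (hA i), hA]
      rfl
    · intro j hjn hji
      rw [hterm, mul_apply_eq_comp,
        star_bvec_not_range (U ^ j * S) (fun x => f^[j] (g x)) (hA j) y (hj j hjn hji), map_zero]

end Helpers

theorem zInvM_add_int (m : ℕ) (hm : 1 ≤ m) {q : ℚ} (hq : q ∈ zInvM m) (a : ℤ) :
    q + a ∈ zInvM m := by
  obtain ⟨p, k, rfl⟩ := hq
  have hm0 : (m : ℚ) ≠ 0 := by positivity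
  refine ⟨p + a * m ^ k, k, ?_⟩
  push_cast
  field_simp

theorem zInvM_mul (m n : ℕ) (hm : 1 ≤ m) {q : ℚ} (hq : q ∈ zInvM m) :
    (n : ℚ) / m * q ∈ zInvM m := by
  obtain ⟨p, k, rfl⟩ := hq
  have hm0 : (m : ℚ) ≠ 0 := by positivity
  refine ⟨n * p, k + 1, ?_⟩
  push_cast
  field_simp
  ring

theorem exists_residue (m n : ℕ) (hn : 2 ≤ n) (hmn : Nat.Coprime m n) (p : ℤ) (k : ℕ) :
    ∃ i ∈ Finset.range n, (n : ℤ) ∣ p + m ^ k - i * m ^ k := by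
  have hc : IsCoprime ((m : ℤ) ^ k) (n : ℤ) := (Nat.isCoprime_iff_coprime.mpr hmn).pow_left
  obtain ⟨a, b, hab⟩ := hc
  have hn0 : (0 : ℤ) < n := by omega
  refine ⟨(((p + m ^ k) * a) % n).toNat, ?_, ?_⟩
  · have h1 := Int.emod_lt_of_pos ((p + m ^ k) * a) hn0
    have h2 := Int.emod_nonneg ((p + m ^ k) * a) hn0.ne'
    rw [Finset.mem_range]; omega
  · rw [Int.toNat_of_nonneg (Int.emod_nonneg _ hn0.ne'), Int.emod_def]
    refine ⟨(p + m ^ k) * b + ((p + m ^ k) * a / n) * m ^ k, ?_⟩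
    linear_combination -(p + (m : ℤ) ^ k) * hab

/-- Let `m ≥ 1` and `n ≥ 2` be integers with `gcd(m,n) = 1`.  Then there
exist bounded operators `U` and `S` on `ℓ²(ℤ[1/m])` such that `U e_q = e_{q+1}` and
`S e_q = e_{(n/m)q − 1}` for every `q ∈ ℤ[1/m]`; moreover `U` is unitary, `S` is an
isometry, and `U^n S = S U^m` and `Σ_{i=0}^{n−1} U^i S S* U^{−i} = 1`, i.e. `z = U`
and `S_i = U^{i−1} S` satisfy the defining relations of `O_{(m,n)}(𝕋)`. -/
theorem exists_representation_circle_correspondence_relations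
    (m n : ℕ) (hm : 1 ≤ m) (hn : 2 ≤ n) (hmn : Nat.Coprime m n) :
    ∃ U S : lp (fun _ : ↥(zInvM m) => ℂ) 2 →L[ℂ] lp (fun _ : ↥(zInvM m) => ℂ) 2,
      (∀ q : ℚ, q ∈ zInvM m → U (stdBasis m q) = stdBasis m (q + 1)) ∧
      (∀ q : ℚ, q ∈ zInvM m →
        S (stdBasis m q) = stdBasis m ((n : ℚ) / (m : ℚ) * q - 1)) ∧
      U ∈ unitary (lp (fun _ : ↥(zInvM m) => ℂ) 2 →L[ℂ] lp (fun _ : ↥(zInvM m) => ℂ) 2) ∧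
      (∀ v, ‖S v‖ = ‖v‖) ∧
      U ^ n * S = S * U ^ m ∧
      ∑ i ∈ Finset.range n, U ^ i * S * star S * star (U ^ i) = 1 := by
  have hm0 : (m : ℚ) ≠ 0 := by positivity
  have hn0 : (n : ℚ) ≠ 0 := by positivity
  let f : zInvM m → zInvM m := fun q => ⟨q.1 + 1, by
    simpa using zInvM_add_int m hm q.2 1⟩
  let g : zInvM m → zInvM m := fun q => ⟨(n : ℚ) / m * q.1 - 1, by
    simpa [sub_eq_add_neg] using zInvM_add_int m hm (zInvM_mul m n hm q.2) (-1)⟩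
  have hfk : ∀ k q, (f^[k] q).1 = q.1 + k := by
    intro k
    induction k with
    | zero => simp
    | succ k ih =>
      intro q
      rw [Function.iterate_succ_apply, ih]
      simp only [f]; push_cast; ring
  have hf : Function.Bijective f := by
    constructor
    · intro a b hab
      have := congrArg Subtype.val hab
      simp only [f] at this
      exact Subtype.ext (by linarith)
    · intro b
      refine ⟨⟨b.1 - 1, by simpa [sub_eq_add_neg] using zInvM_add_int m hm b.2 (-1)⟩, ?_⟩
      exact Subtype.ext (by simp [f])
  have hg : Function.Injective g := by
    intro a b hab
    have := congrArg Subtype.val hab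
    simp only [g] at this
    have h2 : (n : ℚ) / m * a.1 = (n : ℚ) / m * b.1 := by linarith
    exact Subtype.ext (mul_left_cancel₀ (div_ne_zero hn0 hm0) h2)
  have huniq : ∀ i ∈ Finset.range n, ∀ j ∈ Finset.range n, ∀ x y,
      f^[i] (g x) = f^[j] (g y) → i = j := by
    intro i hi j hj x y h
    have h := congrArg Subtype.val h
    rw [hfk, hfk] at h
    simp only [g] at h
    obtain ⟨⟨x, p, k, rfl⟩, ⟨y, p', k', rfl⟩⟩ := x, y
    simp only at h
    have h1 : (n : ℚ) * (p * m ^ k' - p' * m ^ k) = (j - i) * m ^ (k + k' + 1) := by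
      have e1 : (n : ℚ) * (p * m ^ k') = n / m * (p / m ^ k) * m ^ (k + k' + 1) := by
        rw [pow_succ, pow_add]; field_simp
      have e2 : (n : ℚ) * (p' * m ^ k) = n / m * (p' / m ^ k') * m ^ (k + k' + 1) := by
        rw [pow_succ, pow_add]; field_simp
      linear_combination e1 - e2 + (m : ℚ) ^ (k + k' + 1) * h
    have h2 : (n : ℤ) * (p * m ^ k' - p' * m ^ k) = (j - i) * m ^ (k + k' + 1) := by
      exact_mod_cast h1
    have hc : IsCoprime (n : ℤ) ((m : ℤ) ^ (k + k' + 1)) :=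
      (Nat.isCoprime_iff_coprime.mpr hmn.symm).pow_right
    have h3 : (n : ℤ) ∣ j - i := hc.dvd_of_dvd_mul_right ⟨_, h2.symm⟩
    rw [Finset.mem_range] at hi hj
    have h4 : (j : ℤ) - i = 0 := Int.eq_zero_of_abs_lt_dvd h3 (by rw [abs_lt]; omega)
    omega
  obtain ⟨U, S, hU, hS, h1, h2, h3, h4⟩ := abstract_rep f g hf hg m n
    (by
      intro x
      apply Subtype.ext
      rw [hfk]
      simp only [g]
      rw [hfk]
      field_simp
      ring)
    (by
      intro y
      obtain ⟨y, p, k, rfl⟩ := y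
      obtain ⟨i, hi, t, ht⟩ := exists_residue m n hn hmn p k
      have hx : ∃ x, f^[i] (g x) = ⟨(p : ℚ) / m ^ k, p, k, rfl⟩ := by
        refine ⟨⟨((m * t : ℤ) : ℚ) / m ^ k, m * t, k, rfl⟩, ?_⟩
        apply Subtype.ext
        rw [hfk]
        simp only [g]
        have ht' : (p : ℚ) + m ^ k - i * m ^ k = n * t := by exact_mod_cast ht
        push_cast
        field_simp
        linear_combination -ht'
      refine ⟨i, hi, hx, ?_⟩
      obtain ⟨x, hx⟩ := hx
      intro j hj hji z hz
      exact hji (huniq j hj i hi z x (hz.trans hx.symm)))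
  have hstd : ∀ q (h : q ∈ zInvM m), stdBasis m q = bvec ⟨q, h⟩ := by
    intro q h
    simp only [stdBasis, bvec, dif_pos h]
  refine ⟨U, S, ?_, ?_, h1, h2, h3, h4⟩
  · intro q hq
    rw [hstd q hq, hU, hstd _ (f ⟨q, hq⟩).2]
  · intro q hq
    rw [hstd q hq, hS, hstd _ (g ⟨q, hq⟩).2]
end

section
/- Let m ≥ 1 and n ≥ 2 be integers with gcd(m, n) = 1. Let U, S, W be bounded operators on ℓ²(ℤ[1/m]) satisfying U e_q = e_{q+1}, S e_q = e_{(n/m)q}, and W e_q = e_{−q} for all q ∈ ℤ[1/m]. Then W is a self-adjoint unitary satisfying W U W = U* and W S = S W, and W does not belong to the norm closure of the star subalgebra of bounded operators on ℓ²(ℤ[1/m]) generated by U and S. -/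
namespace FlipAux

noncomputable abbrev H (m : ℕ) := lp (fun _ : ↥(zInvM m) => ℂ) 2

lemma neg_mem {m : ℕ} {q : ℚ} (h : q ∈ zInvM m) : -q ∈ zInvM m := by
  obtain ⟨p, k, rfl⟩ := h
  exact ⟨-p, k, by push_cast; ring⟩

lemma add_one_mem {m : ℕ} (hm : 1 ≤ m) {q : ℚ} (h : q ∈ zInvM m) : q + 1 ∈ zInvM m := by
  obtain ⟨p, k, rfl⟩ := h
  have : (m : ℚ) ≠ 0 := by positivity
  exact ⟨p + m ^ k, k, by push_cast; field_simp⟩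

lemma mul_mem {m n : ℕ} {q : ℚ} (h : q ∈ zInvM m) : (n : ℚ) / m * q ∈ zInvM m := by
  obtain ⟨p, k, rfl⟩ := h
  exact ⟨n * p, k + 1, by push_cast; rw [pow_succ, div_mul_div_comm, mul_comm (m : ℚ)]⟩

lemma nat_mem (m k : ℕ) : (k : ℚ) ∈ zInvM m := ⟨k, 0, by simp⟩

lemma basis_apply (m : ℕ) (q : ℚ) (r : zInvM m) :
    (stdBasis m q : H m) r = if (r : ℚ) = q then 1 else 0 := by
  classical
  unfold stdBasis
  split_ifs with h h1 h1
  · subst h1; simp [lp.single_apply]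
  · rw [lp.single_apply, Pi.single_eq_of_ne]
    intro h2; exact h1 (by rw [h2])
  · subst h1; exact absurd r.2 h
  · rfl

lemma basis_eq (m : ℕ) (q : zInvM m) : stdBasis m q = (lp.single 2 q (1 : ℂ) : H m) := by
  classical
  ext r
  rw [basis_apply, lp.single_apply]
  by_cases h : r = q
  · subst h; simp
  · rw [Pi.single_eq_of_ne h, if_neg (fun h2 => h (Subtype.ext h2))]

lemma inner_basis (m : ℕ) (q : zInvM m) (f : H m) : inner ℂ (stdBasis m q) f = f q := by
  classical
  rw [basis_eq, lp.inner_single_left]; simp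

lemma norm_basis (m : ℕ) (q : zInvM m) : ‖stdBasis m q‖ = 1 := by
  classical
  rw [basis_eq, lp.norm_single (by norm_num)]; simp

lemma op_ext {m : ℕ} {A B : H m →L[ℂ] H m}
    (h : ∀ q : zInvM m, A (stdBasis m q) = B (stdBasis m q)) : A = B := by
  classical
  ext1 f
  have hf := lp.hasSum_single (p := 2) (by norm_num) f
  have key : ∀ q, A (lp.single 2 q (f q)) = B (lp.single 2 q (f q)) := by
    intro q
    have : (lp.single 2 q (f q) : H m) = f q • stdBasis m q := by
      rw [basis_eq, ← lp.single_smul]; simp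
    rw [this, map_smul, map_smul, h]
  have hA := hf.mapL A
  have hB := hf.mapL B
  simp only [key] at hA
  exact hA.unique hB

lemma star_coeff {m : ℕ} (A : H m →L[ℂ] H m) (q r : zInvM m) :
    (star A (stdBasis m q)) r = star ((A (stdBasis m r)) q) := by
  rw [← inner_basis, ← inner_basis, ContinuousLinearMap.star_eq_adjoint,
    ContinuousLinearMap.adjoint_inner_right]
  exact (inner_conj_symm _ _).symm

/-- The matrix of `A` is supported on finitely many graphs of increasing affine maps. -/
def Good {m : ℕ} (A : H m →L[ℂ] H m) : Prop :=
  ∃ F : Finset (ℚ × ℚ), (∀ x ∈ F, 0 < x.1) ∧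
    ∀ q r : zInvM m, (A (stdBasis m q)) r ≠ 0 → ∃ x ∈ F, (r : ℚ) = x.1 * q + x.2

lemma Good.add {m : ℕ} {A B : H m →L[ℂ] H m} (hA : Good A) (hB : Good B) : Good (A + B) := by
  classical
  obtain ⟨F, hF, h1⟩ := hA
  obtain ⟨G, hG, h2⟩ := hB
  refine ⟨F ∪ G, ?_, ?_⟩
  · intro x hx
    rcases Finset.mem_union.1 hx with h | h
    exacts [hF x h, hG x h]
  · intro q r h
    by_cases hz : (A (stdBasis m q)) r = 0
    · have : (B (stdBasis m q)) r ≠ 0 := by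
        intro h0; apply h; simp [hz, h0]
      obtain ⟨x, hx, e⟩ := h2 q r this
      exact ⟨x, Finset.mem_union_right _ hx, e⟩
    · obtain ⟨x, hx, e⟩ := h1 q r hz
      exact ⟨x, Finset.mem_union_left _ hx, e⟩

lemma Good.star {m : ℕ} {A : H m →L[ℂ] H m} (hA : Good A) : Good (star A) := by
  classical
  obtain ⟨F, hF, h1⟩ := hA
  refine ⟨F.image (fun x => (x.1⁻¹, -(x.2 / x.1))), ?_, ?_⟩
  · intro x hx
    obtain ⟨y, hy, rfl⟩ := Finset.mem_image.1 hx
    exact inv_pos.2 (hF y hy)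
  · intro q r h
    rw [star_coeff] at h
    obtain ⟨x, hx, e⟩ := h1 r q (by simpa using h)
    refine ⟨_, Finset.mem_image_of_mem _ hx, ?_⟩
    have := (hF x hx).ne'
    simp only
    rw [e]; field_simp; ring

lemma Good.mul {m : ℕ} {A B : H m →L[ℂ] H m} (hA : Good A) (hB : Good B) : Good (A * B) := by
  classical
  obtain ⟨F, hF, h1⟩ := hA
  obtain ⟨G, hG, h2⟩ := hB
  refine ⟨(F ×ˢ G).image (fun z => (z.1.1 * z.2.1, z.1.1 * z.2.2 + z.1.2)), ?_, ?_⟩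
  · intro x hx
    obtain ⟨y, hy, rfl⟩ := Finset.mem_image.1 hx
    rw [Finset.mem_product] at hy
    exact mul_pos (hF _ hy.1) (hG _ hy.2)
  · intro q r h
    have e1 : ((A * B) (stdBasis m q)) r
        = inner ℂ (Star.star A (stdBasis m r)) (B (stdBasis m q)) := by
      rw [← inner_basis, ContinuousLinearMap.star_eq_adjoint,
        ContinuousLinearMap.adjoint_inner_left]
      rfl
    rw [e1, lp.inner_eq_tsum] at h
    have : ∃ s : zInvM m, (A (stdBasis m s)) r ≠ 0 ∧ (B (stdBasis m q)) s ≠ 0 := by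
      by_contra hc
      push Not at hc
      apply h
      rw [← tsum_zero (α := ℂ) (β := zInvM m)]
      congr 1
      funext s
      rw [star_coeff]
      by_cases hz : (A (stdBasis m s)) r = 0
      · simp [hz]
      · simp [hc s hz]
    obtain ⟨s, ha, hb⟩ := this
    obtain ⟨x, hx, e⟩ := h1 s r ha
    obtain ⟨y, hy, e'⟩ := h2 q s hb
    refine ⟨_, Finset.mem_image_of_mem _ (Finset.mk_mem_product hx hy), ?_⟩
    simp only
    rw [e, e']; ring

lemma Good.of_basis {m : ℕ} {A : H m →L[ℂ] H m} (a b : ℚ) (c : ℂ) (ha : 0 < a)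
    (h : ∀ q : zInvM m, A (stdBasis m q) = c • stdBasis m (a * q + b)) : Good A := by
  refine ⟨{(a, b)}, by simpa using ha, ?_⟩
  intro q r hne
  refine ⟨_, Finset.mem_singleton_self _, ?_⟩
  by_contra hc
  apply hne
  rw [h, lp.coeFn_smul, Pi.smul_apply, basis_apply, if_neg hc, smul_zero]

lemma Good.exists_zero {m : ℕ} {A : H m →L[ℂ] H m} (hA : Good A) :
    ∃ q r : zInvM m, (r : ℚ) = -q ∧ (A (stdBasis m q)) r = 0 := by
  classical
  obtain ⟨F, hF, h1⟩ := hA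
  obtain ⟨k, hk⟩ : ∃ k : ℕ, (k : ℚ) ∉ F.image (fun x => -x.2 / (1 + x.1)) := by
    by_contra hc
    push Not at hc
    exact Set.infinite_range_of_injective (Nat.cast_injective (R := ℚ))
      ((Finset.finite_toSet _).subset (by rintro _ ⟨k, rfl⟩; exact hc k))
  refine ⟨⟨k, nat_mem m k⟩, ⟨-k, neg_mem (nat_mem m k)⟩, rfl, ?_⟩
  by_contra hne
  obtain ⟨x, hx, e⟩ := h1 _ _ hne
  apply hk
  refine Finset.mem_image.2 ⟨x, hx, ?_⟩
  have := hF x hx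
  simp only at e
  rw [div_eq_iff (by positivity)]
  linarith

end FlipAux

/-- Let `m ≥ 1` and `n ≥ 2` be integers with `gcd(m,n) = 1`.  Let
`U, S, W` be bounded operators on `ℓ²(ℤ[1/m])` satisfying `U e_q = e_{q+1}`,
`S e_q = e_{(n/m)q}`, and `W e_q = e_{−q}` for all `q ∈ ℤ[1/m]`.  Then `W` is a
self-adjoint unitary satisfying `W U W = U*` and `W S = S W`, and `W` does not belong
to the norm closure of the star subalgebra of bounded operators on `ℓ²(ℤ[1/m])`
generated by `U` and `S`. -/
theorem flip_not_in_closure_of_generated_star_subalgebra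
    (m n : ℕ) (hm : 1 ≤ m) (hn : 2 ≤ n) (hmn : Nat.Coprime m n)
    (U S W : lp (fun _ : ↥(zInvM m) => ℂ) 2 →L[ℂ] lp (fun _ : ↥(zInvM m) => ℂ) 2)
    (hU : ∀ q : ℚ, q ∈ zInvM m → U (stdBasis m q) = stdBasis m (q + 1))
    (hS : ∀ q : ℚ, q ∈ zInvM m → S (stdBasis m q) = stdBasis m ((n : ℚ) / (m : ℚ) * q))
    (hW : ∀ q : ℚ, q ∈ zInvM m → W (stdBasis m q) = stdBasis m (-q)) :
    W ∈ unitary (lp (fun _ : ↥(zInvM m) => ℂ) 2 →L[ℂ] lp (fun _ : ↥(zInvM m) => ℂ) 2) ∧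
    star W = W ∧
    W * U * W = star U ∧
    W * S = S * W ∧
    W ∉ closure ((StarAlgebra.adjoin ℂ
      ({U, S} : Set (lp (fun _ : ↥(zInvM m) => ℂ) 2 →L[ℂ] lp (fun _ : ↥(zInvM m) => ℂ) 2)) :
        StarSubalgebra ℂ _) : Set _) := by
  have hWW : W * W = 1 := by
    apply FlipAux.op_ext
    intro q
    change W (W _) = stdBasis m q
    rw [hW _ q.2, hW _ (FlipAux.neg_mem q.2), neg_neg]
  have hWs : star W = W := by
    apply FlipAux.op_ext
    intro q
    ext r
    rw [FlipAux.star_coeff, hW _ q.2, hW _ r.2, FlipAux.basis_apply, FlipAux.basis_apply]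
    have : ((q : ℚ) = -r) ↔ ((r : ℚ) = -q) := by constructor <;> intro h <;> linarith
    simp only [this]
    split_ifs <;> simp
  refine ⟨?_, hWs, ?_, ?_, ?_⟩
  · rw [Unitary.mem_iff, hWs]
    exact ⟨hWW, hWW⟩
  · apply FlipAux.op_ext
    intro q
    change W (U (W _)) = _
    ext r
    rw [FlipAux.star_coeff, hW _ q.2, hU _ (FlipAux.neg_mem q.2),
      hW _ (FlipAux.add_one_mem hm (FlipAux.neg_mem q.2)), hU _ r.2,
      FlipAux.basis_apply, FlipAux.basis_apply]
    have : ((r : ℚ) = -(-q + 1)) ↔ ((q : ℚ) = r + 1) := by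
      constructor <;> intro h <;> linarith
    simp only [this]
    split_ifs <;> simp
  · apply FlipAux.op_ext
    intro q
    change W (S _) = S (W _)
    rw [hW _ q.2, hS _ q.2, hS _ (FlipAux.neg_mem q.2), hW _ (FlipAux.mul_mem q.2), mul_neg]
  · have hn0 : (0 : ℚ) < n / m := by
      have : 0 < n := by omega
      positivity
    have good : ∀ A ∈ StarAlgebra.adjoin ℂ
        ({U, S} : Set (FlipAux.H m →L[ℂ] FlipAux.H m)), FlipAux.Good A := by
      intro A hA
      induction hA using StarAlgebra.adjoin_induction with
      | mem x hx =>
        rcases hx with rfl | rfl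
        · exact FlipAux.Good.of_basis 1 1 1 one_pos (fun q => by rw [hU _ q.2]; simp)
        · exact FlipAux.Good.of_basis _ 0 1 hn0 (fun q => by rw [hS _ q.2]; simp)
      | algebraMap c =>
        exact FlipAux.Good.of_basis 1 0 c one_pos (fun q => by
          rw [Algebra.algebraMap_eq_smul_one]; simp)
      | add x y _ _ hx hy => exact hx.add hy
      | mul x y _ _ hx hy => exact hx.mul hy
      | star x _ hx => exact hx.star
    intro hcl
    obtain ⟨A, hA, hd⟩ := Metric.mem_closure_iff.1 hcl 1 one_pos
    obtain ⟨q, r, hr, h0⟩ := (good A hA).exists_zero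
    have e : ((W - A) (stdBasis m q)) r = 1 := by
      rw [ContinuousLinearMap.sub_apply, lp.coeFn_sub, Pi.sub_apply, h0, hW _ q.2,
        FlipAux.basis_apply, if_pos hr, sub_zero]
    have h1 : ‖((W - A) (stdBasis m q)) r‖ ≤ ‖(W - A) (stdBasis m q)‖ :=
      lp.norm_apply_le_norm (by norm_num) _ _
    have h2 := (W - A).le_opNorm (stdBasis m q)
    rw [FlipAux.norm_basis, mul_one] at h2
    rw [e, norm_one] at h1
    rw [dist_eq_norm] at hd
    linarith
end

section
/- For every t ∈ ℝ, the following four products vanish: a₁(t)·a₁(2t) = 0, a₁(t)·b₁(2t) = 0, b₁(t)·b₁(2t) = 0, and b₁(t)·a₁(2t) = 0. -/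
open Int in
/-- The 1-periodic function `a₀ : ℝ → ℝ` determined on `[0,1)` by
`a₀(t) = 4(t − 1/2)` on `[1/2, 3/4]`, `a₀(t) = 1 − 8(t − 3/4)` on `[3/4, 7/8]`,
and `a₀(t) = 0` on `[0, 1/2) ∪ [7/8, 1)`. -/
noncomputable def rieffelA0 (t : ℝ) : ℝ :=
  if 1 / 2 ≤ fract t ∧ fract t ≤ 3 / 4 then 4 * (fract t - 1 / 2)
  else if 3 / 4 ≤ fract t ∧ fract t ≤ 7 / 8 then 1 - 8 * (fract t - 3 / 4)
  else 0

open Int in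
/-- The 1-periodic function `a₁ : ℝ → ℝ` determined on `[0,1)` by
`a₁(t) = √(a₀(2t) − a₀(2t)²)` on `[3/4, 7/8]` and `a₁(t) = 0` elsewhere. -/
noncomputable def rieffelA1 (t : ℝ) : ℝ :=
  if 3 / 4 ≤ fract t ∧ fract t ≤ 7 / 8 then
    Real.sqrt (rieffelA0 (2 * t) - rieffelA0 (2 * t) ^ 2)
  else 0

open Int in
/-- The 1-periodic function `b₁ : ℝ → ℝ` determined on `[0,1)` by
`b₁(t) = √(a₀(2t) − a₀(2t)²)` on `[1/4, 3/8]` and `b₁(t) = 0` elsewhere. -/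
noncomputable def rieffelB1 (t : ℝ) : ℝ :=
  if 1 / 4 ≤ fract t ∧ fract t ≤ 3 / 8 then
    Real.sqrt (rieffelA0 (2 * t) - rieffelA0 (2 * t) ^ 2)
  else 0

theorem rieffel_fract_aux (t : ℝ)
    (h : (3 / 4 ≤ Int.fract t ∧ Int.fract t ≤ 7 / 8) ∨
      (1 / 4 ≤ Int.fract t ∧ Int.fract t ≤ 3 / 8)) :
    1 / 2 ≤ Int.fract (2 * t) ∧ Int.fract (2 * t) ≤ 3 / 4 := by
  have ht := Int.floor_add_fract t
  rcases h with ⟨h1, h2⟩ | ⟨h1, h2⟩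
  · have e : Int.fract (2 * t) = 2 * Int.fract t - 1 := by
      rw [Int.fract_eq_iff]
      refine ⟨by linarith, by linarith, 2 * ⌊t⌋ + 1, ?_⟩
      push_cast
      linarith
    rw [e]
    constructor <;> linarith
  · have e : Int.fract (2 * t) = 2 * Int.fract t := by
      rw [Int.fract_eq_iff]
      refine ⟨by linarith, by linarith, 2 * ⌊t⌋, ?_⟩
      push_cast
      linarith
    rw [e]
    constructor <;> linarith

/-- At a point with fractional part `3/4`, `a₀ - a₀²` vanishes. -/
theorem rieffel_sqrt_aux (s : ℝ) (h : Int.fract s = 3 / 4) :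
    Real.sqrt (rieffelA0 s - rieffelA0 s ^ 2) = 0 := by
  have : rieffelA0 s = 1 := by
    unfold rieffelA0
    rw [h]
    norm_num
  rw [this]
  norm_num

theorem rieffelA1_eq_zero_or (t : ℝ) :
    rieffelA1 t = 0 ∨ (1 / 2 ≤ Int.fract (2 * t) ∧ Int.fract (2 * t) < 3 / 4) := by
  by_cases h : 3 / 4 ≤ Int.fract t ∧ Int.fract t ≤ 7 / 8
  · obtain ⟨h1, h2⟩ := rieffel_fract_aux t (Or.inl h)
    rcases h2.lt_or_eq with h3 | h3
    · exact Or.inr ⟨h1, h3⟩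
    · left
      rw [rieffelA1, if_pos h, rieffel_sqrt_aux _ h3]
  · left
    rw [rieffelA1, if_neg h]

theorem rieffelB1_eq_zero_or (t : ℝ) :
    rieffelB1 t = 0 ∨ (1 / 2 ≤ Int.fract (2 * t) ∧ Int.fract (2 * t) < 3 / 4) := by
  by_cases h : 1 / 4 ≤ Int.fract t ∧ Int.fract t ≤ 3 / 8
  · obtain ⟨h1, h2⟩ := rieffel_fract_aux t (Or.inr h)
    rcases h2.lt_or_eq with h3 | h3
    · exact Or.inr ⟨h1, h3⟩
    · left
      rw [rieffelB1, if_pos h, rieffel_sqrt_aux _ h3]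
  · left
    rw [rieffelB1, if_neg h]

theorem rieffelA1_zero (s : ℝ) (h : 1 / 2 ≤ Int.fract s ∧ Int.fract s < 3 / 4) :
    rieffelA1 s = 0 := by
  rw [rieffelA1, if_neg]
  rintro ⟨h1, h2⟩
  linarith [h.2]

theorem rieffelB1_zero (s : ℝ) (h : 1 / 2 ≤ Int.fract s ∧ Int.fract s < 3 / 4) :
    rieffelB1 s = 0 := by
  rw [rieffelB1, if_neg]
  rintro ⟨h1, h2⟩
  linarith [h.1]

/-- For every `t ∈ ℝ`, the four products vanish:
`a₁(t)·a₁(2t) = 0`, `a₁(t)·b₁(2t) = 0`, `b₁(t)·b₁(2t) = 0`, `b₁(t)·a₁(2t) = 0`. -/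
theorem rieffel_products_vanish (t : ℝ) :
    rieffelA1 t * rieffelA1 (2 * t) = 0 ∧
    rieffelA1 t * rieffelB1 (2 * t) = 0 ∧
    rieffelB1 t * rieffelB1 (2 * t) = 0 ∧
    rieffelB1 t * rieffelA1 (2 * t) = 0 := by
  refine ⟨?_, ?_, ?_, ?_⟩
  · rcases rieffelA1_eq_zero_or t with h | h
    · rw [h, zero_mul]
    · rw [rieffelA1_zero _ h, mul_zero]
  · rcases rieffelA1_eq_zero_or t with h | h
    · rw [h, zero_mul]
    · rw [rieffelB1_zero _ h, mul_zero]
  · rcases rieffelB1_eq_zero_or t with h | h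
    · rw [h, zero_mul]
    · rw [rieffelB1_zero _ h, mul_zero]
  · rcases rieffelB1_eq_zero_or t with h | h
    · rw [h, zero_mul]
    · rw [rieffelA1_zero _ h, mul_zero]
end

section
/- For every t ∈ ℝ, a₀(2t) − a₀(2t)² = a₁(t)² + b₁(t)² + a₁(2t)². (This is the relation φ(a₀) − φ(a₀²) = a₁² + b₁² + φ(a₁²), where φ(a)(t) = a(2t).) -/
/-- Doubling either keeps or wraps the fractional part. -/
lemma fract_two_mul_cases (t : ℝ) :
    (Int.fract t < 1 / 2 ∧ Int.fract (2 * t) = 2 * Int.fract t) ∨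
    (1 / 2 ≤ Int.fract t ∧ Int.fract (2 * t) = 2 * Int.fract t - 1) := by
  have h0 := Int.fract_nonneg t
  have h1 := Int.fract_lt_one t
  have h2 := Int.floor_add_fract t
  rcases lt_or_ge (Int.fract t) (1 / 2) with h | h
  · refine Or.inl ⟨h, ?_⟩
    rw [Int.fract_eq_iff]
    refine ⟨by linarith, by linarith, 2 * ⌊t⌋, ?_⟩
    push_cast
    linarith
  · refine Or.inr ⟨h, ?_⟩
    rw [Int.fract_eq_iff]
    refine ⟨by linarith, by linarith, 2 * ⌊t⌋ + 1, ?_⟩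
    push_cast
    linarith

lemma rieffelA0_mem (t : ℝ) : 0 ≤ rieffelA0 t - rieffelA0 t ^ 2 := by
  have h : 0 ≤ rieffelA0 t ∧ rieffelA0 t ≤ 1 := by
    unfold rieffelA0
    split_ifs with h1 h2
    · constructor <;> linarith [h1.1, h1.2]
    · constructor <;> linarith [h2.1, h2.2]
    · norm_num
  nlinarith [h.1, h.2]

/-- For every `t ∈ ℝ`,
`a₀(2t) − a₀(2t)² = a₁(t)² + b₁(t)² + a₁(2t)²`.  This is the relation
`φ(a₀) − φ(a₀²) = a₁² + b₁² + φ(a₁²)`, where `φ(a)(t) = a(2t)`. -/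
theorem rieffel_projection_diagonal_relation (t : ℝ) :
    rieffelA0 (2 * t) - rieffelA0 (2 * t) ^ 2
      = rieffelA1 t ^ 2 + rieffelB1 t ^ 2 + rieffelA1 (2 * t) ^ 2 := by
  have sA (x : ℝ) : rieffelA1 x ^ 2 = if 3 / 4 ≤ Int.fract x ∧ Int.fract x ≤ 7 / 8 then
      rieffelA0 (2 * x) - rieffelA0 (2 * x) ^ 2 else 0 := by
    unfold rieffelA1
    split_ifs
    · exact Real.sq_sqrt (rieffelA0_mem _)
    · norm_num
  have sB (x : ℝ) : rieffelB1 x ^ 2 = if 1 / 4 ≤ Int.fract x ∧ Int.fract x ≤ 3 / 8 then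
      rieffelA0 (2 * x) - rieffelA0 (2 * x) ^ 2 else 0 := by
    unfold rieffelB1
    split_ifs
    · exact Real.sq_sqrt (rieffelA0_mem _)
    · norm_num
  have hu0 := Int.fract_nonneg t
  have hu1 := Int.fract_lt_one t
  have hv0 := Int.fract_nonneg (2 * t)
  have hv1 := Int.fract_lt_one (2 * t)
  have hu := fract_two_mul_cases t
  have hv := fract_two_mul_cases (2 * t)
  rw [sA, sB, sA]
  unfold rieffelA0
  generalize Int.fract (2 * (2 * t)) = w at *
  generalize Int.fract (2 * t) = v at *
  generalize Int.fract t = u at *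
  clear sA sB
  -- The sum of the `a₁(t)²` and `b₁(t)²` parts only depends on `v`.
  have hsum (c : ℝ) : (if 3 / 4 ≤ u ∧ u ≤ 7 / 8 then c else 0) +
      (if 1 / 4 ≤ u ∧ u ≤ 3 / 8 then c else 0) =
      if 1 / 2 ≤ v ∧ v ≤ 3 / 4 then c else 0 := by
    grind
  rw [hsum]
  by_cases h1 : 1 / 2 ≤ v ∧ v ≤ 3 / 4
  · rw [if_pos h1, if_pos h1]
    by_cases h2 : 3 / 4 ≤ v ∧ v ≤ 7 / 8
    · have hv' : v = 3 / 4 := le_antisymm h1.2 h2.1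
      have hw : w = 1 / 2 := by
        rcases hv with h | h <;> linarith [h.1, h.2]
      subst hv' hw
      norm_num
    · rw [if_neg h2]
      ring
  · rw [if_neg h1, if_neg h1]
    by_cases h2 : 3 / 4 ≤ v ∧ v ≤ 7 / 8
    · have hw : w = 2 * v - 1 := by
        rcases hv with h | h <;> linarith [h.1, h.2, h2.1]
      have hw' : 1 / 2 ≤ w ∧ w ≤ 3 / 4 := by
        constructor <;> linarith [h2.1, h2.2]
      rw [if_pos h2, if_pos h2, if_pos hw', hw]
      ring
    · rw [if_neg h2, if_neg h2]
      ring
end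

section
/- Let k ≥ 1 and for t ∈ 𝕋 let U_t ∈ M_k(ℂ) be the diagonal matrix diag(1, t, t², …, t^{k−1}). A continuous function f : 𝕋 → M_k(ℂ) satisfies U_t f(t^k z) U_t* = f(z) for all t, z ∈ 𝕋 if and only if f is a constant diagonal matrix, i.e., there exists a diagonal matrix D ∈ M_k(ℂ) with f(z) = D for all z ∈ 𝕋. (This identifies the fixed point algebra of the action γ_t(f)(z) = U_t f(t^k z) U_t* on M_k(C(𝕋)).) -/
/-- Let `k ≥ 1` and for `t ∈ 𝕋` let `U_t ∈ M_k(ℂ)` be the diagonal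
matrix `diag(1, t, t², …, t^{k−1})`.  A continuous function `f : 𝕋 → M_k(ℂ)`
satisfies `U_t f(t^k z) U_t* = f(z)` for all `t, z ∈ 𝕋` if and only if `f` is a
constant diagonal matrix, i.e. there is a diagonal matrix `D ∈ M_k(ℂ)` with
`f(z) = D` for all `z ∈ 𝕋`.  (This identifies the fixed point algebra of the action
`γ_t(f)(z) = U_t f(t^k z) U_t*` on `M_k(C(𝕋))`.) -/
theorem fixedPointAlgebra_of_circle_action_on_matrix_functions
    (k : ℕ) (hk : 1 ≤ k) (f : Circle → Matrix (Fin k) (Fin k) ℂ)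
    (hf : Continuous f) :
    (∀ t z : Circle,
        Matrix.diagonal (fun j : Fin k => (t : ℂ) ^ (j : ℕ)) * f (t ^ k * z) *
          star (Matrix.diagonal (fun j : Fin k => (t : ℂ) ^ (j : ℕ))) = f z) ↔
    ∃ d : Fin k → ℂ, ∀ z : Circle, f z = Matrix.diagonal d := by
  have hk0 : k ≠ 0 := by omega
  have hkC : (k : ℂ) ≠ 0 := by exact_mod_cast hk0
  have hent : ∀ (t : Circle) (A : Matrix (Fin k) (Fin k) ℂ) (i j : Fin k),
      (Matrix.diagonal (fun j : Fin k => (t : ℂ) ^ (j : ℕ)) * A *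
          star (Matrix.diagonal (fun j : Fin k => (t : ℂ) ^ (j : ℕ)))) i j =
        (t : ℂ) ^ (i : ℕ) * A i j * star ((t : ℂ) ^ (j : ℕ)) := by
    intro t A i j
    rw [Matrix.star_eq_conjTranspose, Matrix.diagonal_conjTranspose, Matrix.mul_diagonal,
      Matrix.diagonal_mul]
    rfl
  have hunit : ∀ (t : Circle) (n : ℕ), star ((t : ℂ) ^ n) * (t : ℂ) ^ n = 1 := by
    intro t n
    have h : ‖(t : ℂ) ^ n‖ = 1 := by rw [norm_pow, Circle.norm_coe, one_pow]
    have h2 := Complex.conj_mul' ((t : ℂ) ^ n)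
    rw [h] at h2
    simpa using h2
  constructor
  · intro h
    refine ⟨fun i => f 1 i i, fun z => ?_⟩
    ext i j
    by_cases hij : i = j
    · subst hij
      rw [Matrix.diagonal_apply_eq]
      obtain ⟨t, ht⟩ : ∃ t : Circle, t ^ k = z := by
        refine ⟨Circle.exp (Complex.arg z / k), ?_⟩
        conv_rhs => rw [← Circle.exp_arg z]
        ext
        rw [Circle.coe_pow, Circle.coe_exp, Circle.coe_exp, ← Complex.exp_nat_mul]
        congr 1
        push_cast
        field_simp
      have h1 := congrFun (congrFun (h t 1) i) i
      rw [hent, ht, mul_one] at h1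
      rw [← h1]
      linear_combination (-(f z i i)) * hunit t i
    · rw [Matrix.diagonal_apply_ne _ hij]
      have hp := Complex.isPrimitiveRoot_exp k hk0
      set t : Circle := Circle.exp (2 * Real.pi / k) with ht
      have htc : (t : ℂ) = Complex.exp (2 * Real.pi * Complex.I / k) := by
        rw [ht, Circle.coe_exp]
        congr 1
        push_cast
        ring
      rw [← htc] at hp
      have htk : t ^ k = 1 := by
        ext
        simpa using hp.pow_eq_one
      have h1 := congrFun (congrFun (h t z) i) j
      rw [hent, htk, one_mul] at h1
      by_contra hne
      apply hij
      apply Fin.ext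
      apply hp.pow_inj i.2 j.2
      apply mul_right_cancel₀ hne
      linear_combination (t : ℂ) ^ (j : ℕ) * h1 - (t : ℂ) ^ (i : ℕ) * f z i j * hunit t j
  · rintro ⟨d, hd⟩ t z
    ext i j
    rw [hent, hd, hd]
    by_cases hij : i = j
    · subst hij
      rw [Matrix.diagonal_apply_eq]
      linear_combination d i * hunit t i
    · rw [Matrix.diagonal_apply_ne _ hij]
      simp
end

section
/- Let A be a unital C*-algebra, let n ≥ 2 and m ≥ 1 be integers, and let z₀, w₀ ∈ A be unitaries with w₀* = w₀ and w₀ z₀ w₀ = z₀*. Define Z ∈ M_n(A) by Z_{1,n} = z₀^m, Z_{i+1,i} = 1 for 1 ≤ i ≤ n−1, and all other entries 0; define W ∈ M_n(A) by W_{1,1} = w₀, W_{i, n+2−i} = w₀ z₀^m for 2 ≤ i ≤ n, and all other entries 0. Then Z is a unitary, W is a self-adjoint unitary, and W Z W = Z*. (These are the matrices φ(z₀) and φ(w₀) defining the left action in the proof of Proposition 4.5.) -/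
theorem mul_apply_single_aux {A : Type*} [NonUnitalNonAssocSemiring A] {n : ℕ}
    (X Y : Matrix (Fin n) (Fin n) A) (i j₀ k : Fin n) (h : ∀ j, j ≠ j₀ → X i j = 0) :
    (X * Y) i k = X i j₀ * Y j₀ k := by
  rw [Matrix.mul_apply]
  apply Finset.sum_eq_single j₀
  · intro j _ hj
    rw [h j hj, zero_mul]
  · intro hh
    exact absurd (Finset.mem_univ _) hh

/-- Let `A` be a unital C*-algebra, `n ≥ 2`, `m ≥ 1`, and let
`z₀, w₀ ∈ A` be unitaries with `w₀* = w₀` and `w₀ z₀ w₀ = z₀*`.  Define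
`Z ∈ M_n(A)` by `Z_{1,n} = z₀^m`, `Z_{i+1,i} = 1` for `1 ≤ i ≤ n−1`, other entries
`0`; define `W ∈ M_n(A)` by `W_{1,1} = w₀`, `W_{i,n+2−i} = w₀ z₀^m` for `2 ≤ i ≤ n`,
other entries `0` (indices here are 1-based; below they are 0-based, so the
conditions become `Z_{0,n-1} = z₀^m`, `Z_{i+1,i} = 1`, `W_{0,0} = w₀` and
`W_{r,c} = w₀ z₀^m` for `r + c = n`, `r ≥ 1`).  Then `Z` is a unitary, `W` is a
self-adjoint unitary, and `W Z W = Z*`. -/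
theorem matrix_implementing_flip_on_correspondence
    {A : Type*} [NormedRing A] [StarRing A] [CStarRing A] [NormedAlgebra ℂ A]
    [StarModule ℂ A] [CompleteSpace A]
    (n m : ℕ) (hn : 2 ≤ n) (hm : 1 ≤ m)
    (z₀ w₀ : A) (hz : z₀ ∈ unitary A) (hw : w₀ ∈ unitary A)
    (hws : star w₀ = w₀) (hcov : w₀ * z₀ * w₀ = star z₀)
    (Z W : Matrix (Fin n) (Fin n) A)
    (hZ : Z = Matrix.of fun i j : Fin n =>
      if (i : ℕ) = 0 ∧ (j : ℕ) = n - 1 then z₀ ^ m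
      else if (i : ℕ) = (j : ℕ) + 1 then 1 else 0)
    (hW : W = Matrix.of fun i j : Fin n =>
      if (i : ℕ) = 0 ∧ (j : ℕ) = 0 then w₀
      else if 1 ≤ (i : ℕ) ∧ (i : ℕ) + (j : ℕ) = n then w₀ * z₀ ^ m else 0) :
    Z ∈ unitary (Matrix (Fin n) (Fin n) A) ∧
    W ∈ unitary (Matrix (Fin n) (Fin n) A) ∧
    star W = W ∧
    W * Z * W = star Z := by
  have hww : w₀ * w₀ = 1 := by
    have := (Unitary.mem_iff.1 hw).1
    rwa [hws] at this
  have hu := pow_mem hz m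
  have hc : w₀ * z₀ ^ m * w₀ = star (z₀ ^ m) := by
    clear hm hZ hW hu
    induction m with
    | zero => simp [hww]
    | succ k ih =>
      rw [pow_succ, star_mul, ← ih, ← hcov, ← pow_succ, pow_succ']
      calc w₀ * (z₀ * z₀ ^ k) * w₀ = w₀ * z₀ * 1 * z₀ ^ k * w₀ := by simp only [mul_one, mul_assoc]
        _ = _ := by rw [← hww]; simp only [mul_assoc]
  generalize z₀ ^ m = u at *
  obtain ⟨hu1, hu2⟩ := Unitary.mem_iff.1 hu
  have hsu : star u * w₀ = w₀ * u := by
    rw [← hc, mul_assoc, hww, mul_one]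
  have hwuwu : w₀ * u * (w₀ * u) = 1 := by
    rw [← mul_assoc, hc, hu1]
  have Zf : ∀ i j : Fin n, Z i j = if (i : ℕ) = 0 ∧ (j : ℕ) = n - 1 then u
      else if (i : ℕ) = (j : ℕ) + 1 then 1 else 0 := fun i j => by rw [hZ]; rfl
  have Sf : ∀ i j : Fin n, (star Z) i j = if (j : ℕ) = 0 ∧ (i : ℕ) = n - 1 then star u
      else if (j : ℕ) = (i : ℕ) + 1 then 1 else 0 := fun i j => by
    rw [Matrix.star_apply, Zf]; split_ifs <;> simp
  have Wf : ∀ i j : Fin n, W i j = if (i : ℕ) = 0 ∧ (j : ℕ) = 0 then w₀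
      else if 1 ≤ (i : ℕ) ∧ (i : ℕ) + (j : ℕ) = n then w₀ * u else 0 :=
    fun i j => by rw [hW]; rfl
  clear hZ hW
  have hWs : star W = W := by
    ext i j
    rw [Matrix.star_apply, Wf, Wf]
    have := i.2
    have := j.2
    split_ifs <;> first | omega | simp [hws, hsu]
  -- expansion of products along the unique nonzero entry of a row
  have Zm : ∀ (Y : Matrix (Fin n) (Fin n) A) (i k : Fin n), (Z * Y) i k =
      if h : (i : ℕ) = 0 then u * Y ⟨n - 1, by omega⟩ k
      else Y ⟨i - 1, by omega⟩ k := by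
    intro Y i k
    split_ifs with h
    · rw [mul_apply_single_aux Z Y i ⟨n - 1, by omega⟩ k, Zf]
      · simp [h]
      · intro j hj
        rw [Ne, Fin.ext_iff] at hj
        simp only at hj
        rw [Zf, if_neg (by omega), if_neg (by omega)]
    · rw [mul_apply_single_aux Z Y i ⟨i - 1, by omega⟩ k, Zf, if_neg (by simp only; omega),
        if_pos (by simp only; omega), one_mul]
      intro j hj
      rw [Ne, Fin.ext_iff] at hj
      simp only at hj
      rw [Zf, if_neg (by omega), if_neg (by omega)]
  have Sm : ∀ (Y : Matrix (Fin n) (Fin n) A) (i k : Fin n), (star Z * Y) i k =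
      if h : (i : ℕ) = n - 1 then star u * Y ⟨0, by omega⟩ k
      else Y ⟨i + 1, by omega⟩ k := by
    intro Y i k
    split_ifs with h
    · rw [mul_apply_single_aux (star Z) Y i ⟨0, by omega⟩ k, Sf]
      · simp [h]
      · intro j hj
        rw [Ne, Fin.ext_iff] at hj
        simp only at hj
        rw [Sf, if_neg (by omega), if_neg (by omega)]
    · rw [mul_apply_single_aux (star Z) Y i ⟨i + 1, by omega⟩ k, Sf, if_neg (by simp only; omega),
        if_pos (by simp only), one_mul]
      intro j hj
      rw [Ne, Fin.ext_iff] at hj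
      simp only at hj
      rw [Sf, if_neg (by omega), if_neg (by omega)]
  have Wm : ∀ (Y : Matrix (Fin n) (Fin n) A) (i k : Fin n), (W * Y) i k =
      if h : (i : ℕ) = 0 then w₀ * Y ⟨0, by omega⟩ k
      else w₀ * u * Y ⟨n - i, by omega⟩ k := by
    intro Y i k
    have hi := i.2
    split_ifs with h
    · rw [mul_apply_single_aux W Y i ⟨0, by omega⟩ k, Wf]
      · simp [h]
      · intro j hj
        rw [Ne, Fin.ext_iff] at hj
        simp only at hj
        rw [Wf, if_neg (by omega), if_neg (by omega)]
    · rw [mul_apply_single_aux W Y i ⟨n - i, by omega⟩ k, Wf, if_neg (by simp only; omega),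
        if_pos (by simp only; omega)]
      intro j hj
      rw [Ne, Fin.ext_iff] at hj
      simp only at hj
      rw [Wf, if_neg (by omega), if_neg (by omega)]
  have hWW : W * W = 1 := by
    ext i k
    have := i.2
    have := k.2
    rw [Wm, Matrix.one_apply]
    simp only [Wf, Fin.ext_iff]
    split_ifs <;> first | omega | (exfalso; clear Zf Sf Wf Zm Sm Wm; grind) | simp [hww, hwuwu]
  have hZS : Z * star Z = 1 := by
    ext i k
    have := i.2
    have := k.2
    rw [Zm, Matrix.one_apply]
    simp only [Sf, Fin.ext_iff]
    split_ifs <;> first | omega | (exfalso; clear Zf Sf Wf Zm Sm Wm; grind) | simp [hu2]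
  have hSZ : star Z * Z = 1 := by
    ext i k
    have := i.2
    have := k.2
    rw [Sm, Matrix.one_apply]
    simp only [Zf, Fin.ext_iff]
    split_ifs <;> first | omega | (exfalso; clear Zf Sf Wf Zm Sm Wm; grind) | simp [hu1]
  have hWZ : W * Z = star Z * W := by
    ext i k
    have := i.2
    have := k.2
    rw [Wm, Sm]
    simp only [Wf, Zf]
    split_ifs <;> first | omega | (exfalso; clear Zf Sf Wf Zm Sm Wm; grind) | simp [hsu]
  refine ⟨Unitary.mem_iff.2 ⟨hSZ, hZS⟩, Unitary.mem_iff.2 ⟨?_, ?_⟩, hWs, ?_⟩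
  · rw [hWs, hWW]
  · rw [hWs, hWW]
  · rw [hWZ, mul_assoc, hWW, mul_one]
end

section
/- Let A be a unital C*-algebra containing a unitary z and elements S₁, …, S_n (n ≥ 2, m ≥ 1) satisfying S_i* S_j = δ_{ij}·1, Σ_{i=1}^n S_i S_i* = 1, z S_i = S_{i+1} for 1 ≤ i ≤ n−1, and z S_n = S₁ z^m. If k ≥ 1 is an integer with gcd(k, n) = 1, then Σ_{q=1}^{n} z^{(q−1)k} S₁ S₁* z^{−(q−1)k} = 1; equivalently, the elements S̃_q = z^{(q−1)k} S₁ (q = 1, …, n) satisfy Σ_{q=1}^n S̃_q S̃_q* = 1. -/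
/-- Let `A` be a unital C*-algebra containing a unitary `z` and elements
`S₁, …, S_n` (`n ≥ 2`, `m ≥ 1`) satisfying `S_i* S_j = δ_{ij}·1`, `Σ S_i S_i* = 1`,
`z S_i = S_{i+1}` for `1 ≤ i ≤ n−1`, and `z S_n = S₁ z^m` (the defining relations of
`O_{(m,n)}(𝕋)`; indices are 0-based below, so `S₁ = S 0`).  If `k ≥ 1` is an integer
with `gcd(k, n) = 1`, then `Σ_{q=1}^{n} z^{(q−1)k} S₁ S₁* z^{−(q−1)k} = 1`;
here `z^{−l} = (z*)^l = star (z^l)` since `z` is unitary.  Equivalently, the elements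
`S̃_q = z^{(q−1)k} S₁` (`q = 1, …, n`) satisfy `Σ_{q=1}^n S̃_q S̃_q* = 1`. -/
theorem sum_translates_of_range_projection_eq_one
    {A : Type*} [NormedRing A] [StarRing A] [CStarRing A] [NormedAlgebra ℂ A]
    [StarModule ℂ A] [CompleteSpace A]
    (n m : ℕ) (hn : 2 ≤ n) (hm : 1 ≤ m)
    (z : A) (hz : z ∈ unitary A) (S : Fin n → A)
    (hortho : ∀ i j : Fin n, star (S i) * S j = if i = j then 1 else 0)
    (hsum : ∑ i : Fin n, S i * star (S i) = 1)
    (hshift : ∀ i : Fin n, ∀ h : (i : ℕ) + 1 < n, z * S i = S ⟨(i : ℕ) + 1, h⟩)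
    (hlast : z * S ⟨n - 1, by omega⟩ = S ⟨0, by omega⟩ * z ^ m)
    (k : ℕ) (hk : 1 ≤ k) (hkn : Nat.Coprime k n) :
    ∑ q ∈ Finset.range n,
        z ^ (q * k) * S ⟨0, by omega⟩ * star (S ⟨0, by omega⟩) * star (z ^ (q * k))
      = 1 := by
  have hpos : 0 < n := by omega
  have key : ∀ l : ℕ, ∃ j : ℕ,
      z ^ l * S ⟨0, by omega⟩ = S ⟨l % n, Nat.mod_lt _ hpos⟩ * z ^ j := by
    intro l
    induction l with
    | zero => exact ⟨0, by simp⟩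
    | succ l ih =>
      obtain ⟨j, hj⟩ := ih
      have hlt := Nat.mod_lt l hpos
      by_cases h : l % n + 1 < n
      · refine ⟨j, ?_⟩
        have e : (⟨(l + 1) % n, Nat.mod_lt _ hpos⟩ : Fin n) = ⟨l % n + 1, h⟩ := by
          apply Fin.ext
          show (l + 1) % n = l % n + 1
          rw [← Nat.mod_add_mod, Nat.mod_eq_of_lt h]
        rw [pow_succ', mul_assoc, hj, ← mul_assoc, hshift _ h, e]
      · refine ⟨m + j, ?_⟩
        have h1 : l % n = n - 1 := by omega
        have e : (⟨(l + 1) % n, Nat.mod_lt _ hpos⟩ : Fin n) = ⟨0, hpos⟩ := by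
          apply Fin.ext
          show (l + 1) % n = 0
          rw [← Nat.mod_add_mod, h1, Nat.sub_add_cancel hpos, Nat.mod_self]
        have e2 : (⟨l % n, Nat.mod_lt _ hpos⟩ : Fin n) = ⟨n - 1, by omega⟩ := Fin.ext h1
        rw [pow_succ', mul_assoc, hj, ← mul_assoc, e2, hlast, e, pow_add, mul_assoc]
  have term : ∀ l : ℕ,
      z ^ l * S ⟨0, by omega⟩ * star (S ⟨0, by omega⟩) * star (z ^ l)
        = S ⟨l % n, Nat.mod_lt _ hpos⟩ * star (S ⟨l % n, Nat.mod_lt _ hpos⟩) := by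
    intro l
    obtain ⟨j, hj⟩ := key l
    have hu : z ^ j * star (z ^ j) = 1 := Unitary.mul_star_self_of_mem (pow_mem hz j)
    rw [mul_assoc, ← star_mul, hj, star_mul, mul_assoc, ← mul_assoc (z ^ j), hu, one_mul]
  rw [Finset.sum_congr rfl (fun q _ => term (q * k)), ← hsum, Finset.sum_range
    (fun q => S ⟨q * k % n, Nat.mod_lt _ hpos⟩ * star (S ⟨q * k % n, Nat.mod_lt _ hpos⟩))]
  have hinj : Function.Injective
      (fun q : Fin n => (⟨(q : ℕ) * k % n, Nat.mod_lt _ hpos⟩ : Fin n)) := by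
    intro a b hab
    have h1 : (a : ℕ) * k ≡ b * k [MOD n] := congrArg Fin.val hab
    have h2 : (a : ℕ) ≡ b [MOD n] :=
      Nat.ModEq.cancel_right_of_coprime (Nat.Coprime.symm hkn) h1
    exact Fin.ext (Nat.ModEq.eq_of_lt_of_lt h2 a.2 b.2)
  exact Function.Bijective.sum_comp (Finite.injective_iff_bijective.mp hinj)
    (fun i => S i * star (S i))
end

section
/- Let A be a unital C*-algebra containing a unitary z and an isometry S₁ satisfying S₁* z^n S₁ = z^m, where m ≥ 1, n ≥ 2 are integers with gcd(m, n) = 1. If k ≥ 1 divides n, then z belongs to the star subalgebra of A generated by z^k and S₁. -/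
/-- Let `A` be a unital C*-algebra containing a unitary `z` and an
isometry `S₁` satisfying `S₁* z^n S₁ = z^m`, where `m ≥ 1`, `n ≥ 2` are integers with
`gcd(m, n) = 1`.  If `k ≥ 1` divides `n`, then `z` belongs to the star subalgebra of
`A` generated by `z^k` and `S₁`. -/
theorem z_mem_starSubalgebra_adjoin_zPow_S1
    {A : Type*} [NormedRing A] [StarRing A] [CStarRing A] [NormedAlgebra ℂ A]
    [StarModule ℂ A] [CompleteSpace A]
    (m n : ℕ) (hm : 1 ≤ m) (hn : 2 ≤ n) (hmn : Nat.Coprime m n)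
    (z S₁ : A) (hz : z ∈ unitary A) (hiso : star S₁ * S₁ = 1)
    (hrel : star S₁ * z ^ n * S₁ = z ^ m)
    (k : ℕ) (hk : 1 ≤ k) (hdvd : k ∣ n) :
    z ∈ StarAlgebra.adjoin ℂ ({z ^ k, S₁} : Set A) := by
  have hzk : z ^ k ∈ StarAlgebra.adjoin ℂ ({z ^ k, S₁} : Set A) :=
    StarAlgebra.subset_adjoin ℂ _ (by simp)
  have hS : S₁ ∈ StarAlgebra.adjoin ℂ ({z ^ k, S₁} : Set A) :=
    StarAlgebra.subset_adjoin ℂ _ (by simp)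
  have hzn : z ^ n ∈ StarAlgebra.adjoin ℂ ({z ^ k, S₁} : Set A) := by
    obtain ⟨c, rfl⟩ := hdvd
    rw [pow_mul]
    exact pow_mem hzk c
  have hzm : z ^ m ∈ StarAlgebra.adjoin ℂ ({z ^ k, S₁} : Set A) := by
    rw [← hrel]
    exact mul_mem (mul_mem (star_mem hS) hzn) hS
  rcases Nat.eq_or_lt_of_le hk with h1 | h1
  · rw [← h1, pow_one] at hzk
    rwa [← h1, pow_one]
  · have hc : Nat.Coprime m k := Nat.Coprime.coprime_dvd_right hdvd hmn
    obtain ⟨a, -, ha⟩ := Nat.exists_mul_mod_eq_one_of_coprime hc h1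
    have hq : m * a = 1 + k * (m * a / k) := by
      have := Nat.mod_add_div (m * a) k
      omega
    generalize m * a / k = q at hq
    have hu : z ^ (k * q) * star (z ^ (k * q)) = 1 :=
      Unitary.mul_star_self_of_mem (pow_mem hz _)
    have key : z = (z ^ m) ^ a * star ((z ^ k) ^ q) := by
      rw [← pow_mul, ← pow_mul, hq, pow_add, pow_one, mul_assoc, hu, mul_one]
    have hmem := mul_mem (pow_mem hzm a) (star_mem (pow_mem hzk q))
    rwa [← key] at hmem
end
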